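/- Let K ∈ St(D,d) be an isometry (K†K = 1_d) and let F ∈ ℂ^{D×d} be arbitrary, defining the ℂ-linear functional f(Δ) = Tr(Fᵀ Δ) on ℂ^{D×d}. Then the matrix X := F* − K Fᵀ K lies in the tangent space T_K St(D,d), i.e. K†X = −X†K, and for every Δ ∈ T_K St(D,d) one has Re{Tr(Fᵀ Δ)} = ⟨X, Δ⟩_K; that is, X solves the equation Re{f(Δ)} = ⟨X, Δ⟩_K for all tangent vectors Δ. -/

import Mathlib

open Matrix

/-!
Write `A = Fᵀ`, so that `X = Aᴴ - K * A * K`. Since `Kᴴ * K = 1`, the product `Kᴴ * X` is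
`(A * K)ᴴ - A * K`, which is skew-Hermitian, and the canonical metric pairs `X` with `Δ` through
`Xᴴ * (1 - ½ K Kᴴ) = A - ½ (A * K + (A * K)ᴴ) * Kᴴ`. The correction term pairs the Hermitian matrix
`A * K + (A * K)ᴴ` with `Kᴴ * Δ`, which is skew-Hermitian for tangent `Δ`, and the trace of such a
product is purely imaginary.
-/

section Tangent

variable {m n R : Type*} [Fintype m] [Ring R] [StarRing R]

/-- `Δ` lies in the tangent space at `K` of the Stiefel manifold of matrices with orthonormal
columns. It is meaningful when `Kᴴ * K = 1`, which is not part of the definition. -/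
def IsStiefelTangent (K Δ : Matrix m n R) : Prop :=
  Kᴴ * Δ = -(Δᴴ * K)

theorem isStiefelTangent_iff_mem_skewAdjoint {K Δ : Matrix m n R} :
    IsStiefelTangent K Δ ↔ Kᴴ * Δ ∈ skewAdjoint (Matrix n n R) := by
  rw [skewAdjoint.mem_iff, star_eq_conjTranspose, conjTranspose_mul, conjTranspose_conjTranspose,
    IsStiefelTangent, eq_comm, neg_eq_iff_eq_neg]

variable [Fintype n]

/-- The tangent vector `F* - K Fᵀ K` at `K` that represents the functional `Δ ↦ Re Tr(Fᵀ Δ)` with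
respect to the canonical metric. -/
def stiefelGradient (K F : Matrix m n R) : Matrix m n R :=
  F.map star - K * Fᵀ * K

theorem conjTranspose_stiefelGradient (K F : Matrix m n R) :
    (stiefelGradient K F)ᴴ = Fᵀ - (Fᵀ * K)ᴴ * Kᴴ := by
  have conjTranspose_map_star : (F.map star)ᴴ = Fᵀ := conjTranspose_conjTranspose Fᵀ
  rw [stiefelGradient, conjTranspose_sub, conjTranspose_map_star, Matrix.mul_assoc,
    conjTranspose_mul K]

variable [DecidableEq n]

theorem conjTranspose_stiefelGradient_mul {K : Matrix m n R} (hK : Kᴴ * K = 1)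
    (F : Matrix m n R) :
    (stiefelGradient K F)ᴴ * K = Fᵀ * K - (Fᵀ * K)ᴴ := by
  rw [conjTranspose_stiefelGradient, Matrix.sub_mul, Matrix.mul_assoc _ Kᴴ, hK, Matrix.mul_one]

theorem isStiefelTangent_stiefelGradient {K : Matrix m n R} (hK : Kᴴ * K = 1)
    (F : Matrix m n R) :
    IsStiefelTangent K (stiefelGradient K F) := by
  have conjTranspose_mul_gradient : Kᴴ * stiefelGradient K F = (Fᵀ * K)ᴴ - Fᵀ * K := by
    simpa using congrArg conjTranspose (conjTranspose_stiefelGradient_mul hK F)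
  rw [IsStiefelTangent, conjTranspose_mul_gradient, conjTranspose_stiefelGradient_mul hK, neg_sub]

end Tangent

theorem conjTranspose_stiefelGradient_mul_one_sub {m n R : Type*} [Fintype m] [Fintype n]
    [DecidableEq m] [DecidableEq n] [Field R] [NeZero (2 : R)] [StarRing R]
    {K : Matrix m n R} (hK : Kᴴ * K = 1) (F : Matrix m n R) :
    (stiefelGradient K F)ᴴ * (1 - (1 / 2 : R) • (K * Kᴴ)) =
      Fᵀ - (1 / 2 : R) • ((Fᵀ * K + (Fᵀ * K)ᴴ) * Kᴴ) := by
  have half_smul_add_half_smul :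
      (1 / 2 : R) • ((Fᵀ * K)ᴴ * Kᴴ) + (1 / 2 : R) • ((Fᵀ * K)ᴴ * Kᴴ) = (Fᵀ * K)ᴴ * Kᴴ := by
    rw [← add_smul, add_halves, one_smul]
  rw [Matrix.mul_sub, Matrix.mul_one, Matrix.mul_smul, ← Matrix.mul_assoc,
    conjTranspose_stiefelGradient_mul hK, conjTranspose_stiefelGradient, Matrix.sub_mul,
    Matrix.add_mul]
  linear_combination (norm := module) half_smul_add_half_smul

section RCLike

variable {m n 𝕜 : Type*} [Fintype m] [Fintype n] [RCLike 𝕜]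

theorem re_trace_mul_eq_zero_of_isHermitian_of_mem_skewAdjoint {S A : Matrix n n 𝕜}
    (hS : S.IsHermitian) (hA : A ∈ skewAdjoint (Matrix n n 𝕜)) :
    RCLike.re (S * A).trace = 0 := by
  have star_trace : star (S * A).trace = -(S * A).trace := by
    rw [← trace_conjTranspose, conjTranspose_mul, hS.eq, ← star_eq_conjTranspose,
      skewAdjoint.mem_iff.mp hA, Matrix.neg_mul, trace_neg, trace_mul_comm]
  have re_eq_neg : RCLike.re (S * A).trace = -RCLike.re (S * A).trace := by
    simpa using congrArg RCLike.re star_trace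
  exact self_eq_neg.mp re_eq_neg

variable [DecidableEq m]

/-- The canonical metric `⟨Δ₁, Δ₂⟩_K` on the Stiefel manifold, as a pairing of arbitrary matrices
rather than only of tangent vectors at `K`. -/
def stiefelMetric (K Δ₁ Δ₂ : Matrix m n 𝕜) : ℝ :=
  RCLike.re (Δ₁ᴴ * (1 - (1 / 2 : 𝕜) • (K * Kᴴ)) * Δ₂).trace

variable [DecidableEq n]

theorem stiefelMetric_stiefelGradient {K Δ : Matrix m n 𝕜} (hK : Kᴴ * K = 1)
    (F : Matrix m n 𝕜) (hΔ : IsStiefelTangent K Δ) :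
    stiefelMetric K (stiefelGradient K F) Δ = RCLike.re (Fᵀ * Δ).trace := by
  have re_trace_correction : RCLike.re ((Fᵀ * K + (Fᵀ * K)ᴴ) * (Kᴴ * Δ)).trace = 0 :=
    re_trace_mul_eq_zero_of_isHermitian_of_mem_skewAdjoint
      (isHermitian_add_transpose_self (Fᵀ * K)) (isStiefelTangent_iff_mem_skewAdjoint.mp hΔ)
  have half_eq_ofReal : (1 / 2 : 𝕜) = ((1 / 2 : ℝ) : 𝕜) := by push_cast; rfl
  rw [stiefelMetric, conjTranspose_stiefelGradient_mul_one_sub hK, Matrix.sub_mul,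
    Matrix.smul_mul, Matrix.mul_assoc _ Kᴴ, trace_sub, trace_smul, smul_eq_mul, map_sub,
    half_eq_ofReal, RCLike.re_ofReal_mul, re_trace_correction, mul_zero, sub_zero]

theorem stiefel_gradient_formula_general (K F : Matrix m n 𝕜) (hK : Kᴴ * K = 1) :
    IsStiefelTangent K (stiefelGradient K F) ∧
      ∀ Δ : Matrix m n 𝕜, IsStiefelTangent K Δ →
        RCLike.re (Fᵀ * Δ).trace = stiefelMetric K (stiefelGradient K F) Δ :=
  ⟨isStiefelTangent_stiefelGradient hK F,
    fun _ hΔ => (stiefelMetric_stiefelGradient hK F hΔ).symm⟩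

end RCLike

/-- For `K` an isometry and `F` arbitrary, the matrix
`X = F* − K Fᵀ K` is tangent at `K` and solves `Re{Tr(Fᵀ Δ)} = ⟨X, Δ⟩_K`
for all tangent vectors `Δ`, where `⟨·,·⟩_K` is the canonical metric
`⟨Δ₁,Δ₂⟩_K = Re Tr(Δ₁ᴴ (1 − ½KKᴴ) Δ₂)` on the complex Stiefel manifold. -/
theorem stiefel_gradient_formula {D d : ℕ} (K F : Matrix (Fin D) (Fin d) ℂ)
    (hK : Kᴴ * K = 1) :
    let X : Matrix (Fin D) (Fin d) ℂ := F.map (starRingEnd ℂ) - K * Fᵀ * K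
    Kᴴ * X = -(Xᴴ * K) ∧
      ∀ Δ : Matrix (Fin D) (Fin d) ℂ, Kᴴ * Δ = -(Δᴴ * K) →
        (Matrix.trace (Fᵀ * Δ)).re =
          (Matrix.trace
            (Xᴴ * ((1 : Matrix (Fin D) (Fin D) ℂ) - (1 / 2 : ℂ) • (K * Kᴴ)) * Δ)).re := by
  exact stiefel_gradient_formula_general K F hK
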